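/- arXiv:2502.20958 — 4 statements merged into one kernel-verified Lean document; each statement's English description precedes it below -/
import Mathlib

section
/- Let w, x, y, z be nonempty words with w ≺ x and y ≺ z. Then wy ≺ xz, wz ≺ xz, and xy ≺ xz. If moreover x and z are Lyndon words with x < z lexicographically, then also yx ≺ xz, yw ≺ xz, and zw ≺ xz. -/
/-!
On words of equal length, reversing the lexicographic order amounts to reversing the order of the
alphabet, so `≺` is the shortlex order `List.Shortlex` over the reversed alphabet. It is transitive
and preserved by multiplication by a common word on either side, which yields the first three
claims; the other three follow in the same way from `zx ≺ xz`, that is, from `xz < zx`.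

To see `xz < zx` when `x < z` and `z` is Lyndon: if `x` is not a prefix of `z`, the first differing
letter decides. Otherwise `z = xu` with `u` a proper nonempty suffix of `z`, so `z < u < ux`, and
prepending `x` gives `xz < xux = zx`.
-/

/-- The lexicographic order on words over the alphabet `v_0 < v_1 < ⋯ < v_{n-1}`
(indexed by `Fin n`), in which a word is smaller than any word having it as a proper prefix. -/
def LexLt {n : ℕ} (x y : List (Fin n)) : Prop := List.Lex (· < ·) x y

/-- The order `≺` : `x ≺ y` iff `ℓ(x) < ℓ(y)`, or `ℓ(x) = ℓ(y)` and `x > y` lexicographically. -/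
def PrecLt {n : ℕ} (x y : List (Fin n)) : Prop :=
  x.length < y.length ∨ (x.length = y.length ∧ LexLt y x)

/-- The order `≼` : `x ≼ y` iff `x ≺ y` or `x = y`. -/
def PrecLe {n : ℕ} (x y : List (Fin n)) : Prop := PrecLt x y ∨ x = y

/-- A nonempty word is Lyndon if it is lexicographically strictly smaller than every proper
nonempty suffix of itself. -/
def IsLyndon {n : ℕ} (l : List (Fin n)) : Prop :=
  l ≠ [] ∧ ∀ k : ℕ, 0 < k → k < l.length → LexLt l (l.drop k)

section Lex

variable {α : Type*} {r : α → α → Prop} {x y : List α}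

lemma exists_eq_append_or_lex_append_append (h : List.Lex r x y) :
    (∃ u, u ≠ [] ∧ y = x ++ u) ∨ ∀ s t, List.Lex r (x ++ s) (y ++ t) := by
  induction h with
  | nil => exact .inl ⟨_, List.cons_ne_nil _ _, rfl⟩
  | rel hab => exact .inr fun _ _ => .rel hab
  | cons _ ih =>
    rcases ih with ⟨u, hu, rfl⟩ | ih
    · exact .inl ⟨u, hu, rfl⟩
    · exact .inr fun s t => .cons (ih s t)

lemma lex_append_append_of_length_eq (h : List.Lex r x y) (hlen : x.length = y.length)
    (s t : List α) : List.Lex r (x ++ s) (y ++ t) := by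
  rcases exists_eq_append_or_lex_append_append h with ⟨u, hu, rfl⟩ | happend
  · simp [hu] at hlen
  · exact happend s t

lemma lex_swap_of_length_eq (h : List.Lex r x y) (hlen : x.length = y.length) :
    List.Lex (Function.swap r) y x := by
  induction h with
  | nil => simp at hlen
  | rel hab => exact .rel hab
  | cons _ ih => exact .cons (ih (Nat.succ.inj hlen))

end Lex

section Shortlex

variable {α : Type*} {r : α → α → Prop} {x y : List α}

instance isTrans_lex [IsTrans α r] : IsTrans (List α) (List.Lex r) :=
  ⟨fun _ _ _ => List.lex_trans (trans_of r)⟩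

instance isTrans_shortlex [IsTrans α r] : IsTrans (List α) (List.Shortlex r) :=
  inferInstanceAs <| IsTrans _ (InvImage _ _)

lemma shortlex_append_append_right (h : List.Shortlex r x y) (t : List α) :
    List.Shortlex r (x ++ t) (y ++ t) := by
  rcases List.shortlex_def.mp h with hlen | ⟨hlen, hlex⟩
  · exact .of_length_lt (by simpa using hlen)
  · exact .of_lex (by simpa using hlen) (lex_append_append_of_length_eq hlex hlen t t)

lemma shortlex_gt_iff [LT α] : List.Shortlex (· > ·) x y ↔
    x.length < y.length ∨ x.length = y.length ∧ y < x := by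
  rw [List.shortlex_def]
  exact or_congr_right <| and_congr_right fun hlen =>
    ⟨fun h => lex_swap_of_length_eq h hlen, fun h => lex_swap_of_length_eq h hlen.symm⟩

end Shortlex

/-- Lyndon words over an arbitrary alphabet: nonempty words that are lexicographically smaller than
each of their proper nonempty suffixes, the latter being encoded as `l.drop k` as in `IsLyndon`. -/
def IsLyndonWord {α : Type*} [LT α] (l : List α) : Prop :=
  l ≠ [] ∧ ∀ k : ℕ, 0 < k → k < l.length → l < l.drop k

section Comparison

variable {α : Type*}

lemma lt_append_of_ne_nil [LT α] {x : List α} (hx : x ≠ []) (u : List α) : u < u ++ x := by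
  obtain ⟨a, t, rfl⟩ := List.exists_cons_of_ne_nil hx
  simpa using List.append_left_lt (l₁ := u) (List.nil_lt_cons a t)

lemma IsLyndonWord.append_lt_right [LT α] {x u : List α} (h : IsLyndonWord (x ++ u))
    (hx : x ≠ []) (hu : u ≠ []) : x ++ u < u := by
  have hdrop := h.2 x.length (List.length_pos_iff.mpr hx)
    (by simpa using List.length_pos_iff.mpr hu)
  rwa [List.drop_left] at hdrop

variable [Preorder α] {w x y z : List α}

lemma IsLyndonWord.append_lt_append_comm (hz : IsLyndonWord z) (hx : x ≠ []) (hxz : x < z) :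
    x ++ z < z ++ x := by
  rcases exists_eq_append_or_lex_append_append hxz with ⟨u, hu, rfl⟩ | happend
  · calc
      x ++ (x ++ u) < x ++ (u ++ x) :=
        List.append_left_lt <| List.lt_trans (hz.append_lt_right hx hu) (lt_append_of_ne_nil hx u)
      _ = (x ++ u) ++ x := (List.append_assoc x u x).symm
  · exact happend z x

local infix:50 " ≺ " => List.Shortlex (· > ·)

theorem comparison_lemma_general (hwx : w ≺ x) (hyz : y ≺ z) :
    w ++ y ≺ x ++ z ∧ w ++ z ≺ x ++ z ∧ x ++ y ≺ x ++ z ∧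
      (IsLyndonWord z → x < z →
        y ++ x ≺ x ++ z ∧ y ++ w ≺ x ++ z ∧ z ++ w ≺ x ++ z) := by
  have hwz_xz : w ++ z ≺ x ++ z := shortlex_append_append_right hwx z
  have hwy_xz : w ++ y ≺ x ++ z := _root_.trans (hyz.append_left w) hwz_xz
  refine ⟨hwy_xz, hwz_xz, hyz.append_left x, fun hz hxz => ?_⟩
  have hx : x ≠ [] := by
    rintro rfl
    exact List.not_shortlex_nil_right hwx
  have hzx_xz : z ++ x ≺ x ++ z :=
    shortlex_gt_iff.mpr <| .inr ⟨by simp [Nat.add_comm], hz.append_lt_append_comm hx hxz⟩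
  have hzw_xz : z ++ w ≺ x ++ z := _root_.trans (hwx.append_left z) hzx_xz
  have hyx_xz : y ++ x ≺ x ++ z := _root_.trans (shortlex_append_append_right hyz x) hzx_xz
  have hyw_xz : y ++ w ≺ x ++ z := _root_.trans (shortlex_append_append_right hyz w) hzw_xz
  exact ⟨hyx_xz, hyw_xz, hzw_xz⟩

end Comparison

lemma precLt_iff_shortlex_gt {n : ℕ} {x y : List (Fin n)} :
    PrecLt x y ↔ List.Shortlex (· > ·) x y :=
  shortlex_gt_iff.symm

/-- If `w, x, y, z` are nonempty words with `w ≺ x` and `y ≺ z`, then `wy ≺ xz`, `wz ≺ xz` and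
`xy ≺ xz`; if moreover `x, z` are Lyndon with `x < z` lexicographically, then also `yx ≺ xz`,
`yw ≺ xz` and `zw ≺ xz`. -/
theorem comparison_lemma {n : ℕ} (w x y z : List (Fin n))
    (hw : w ≠ []) (hx : x ≠ []) (hy : y ≠ []) (hz : z ≠ [])
    (h1 : PrecLt w x) (h2 : PrecLt y z) :
    PrecLt (w ++ y) (x ++ z) ∧ PrecLt (w ++ z) (x ++ z) ∧ PrecLt (x ++ y) (x ++ z) ∧
      (IsLyndon x → IsLyndon z → LexLt x z →
        PrecLt (y ++ x) (x ++ z) ∧ PrecLt (y ++ w) (x ++ z) ∧ PrecLt (z ++ w) (x ++ z)) := by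
  simp only [precLt_iff_shortlex_gt] at h1 h2 ⊢
  exact (comparison_lemma_general h1 h2).imp_right <| .imp_right <| .imp_right fun h _ => h
end

section
/- Every factor of a good word is good: if x, y, z are words (x, z possibly empty, y nonempty) such that the concatenation xyz is good, then y is good. -/
/-- `B_w = b_{i_1} ⋯ b_{i_k} ∈ R` for the word `w = v_{i_1} ⋯ v_{i_k}` (`B_w = 1` for `w = []`). -/
def Bword {n : ℕ} {R : Type*} [Monoid R] (b : Fin n → R) (w : List (Fin n)) : R :=
  (w.map b).prod

/-- A word `g` is good if `B_g` does not lie in the `K`-linear span of the `B_w` with `w ≺ g`. -/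
def IsGood (K : Type*) {n : ℕ} {R : Type*} [Field K] [Ring R] [Algebra K R]
    (b : Fin n → R) (g : List (Fin n)) : Prop :=
  Bword b g ∉ Submodule.span K (Bword b '' {w | PrecLt w g})

theorem lex_append_append_of_length_eq_s3 {α : Type*} {r : α → α → Prop} {u v : List α}
    (h : List.Lex r u v) (hlen : u.length = v.length) (s t : List α) :
    List.Lex r (u ++ s) (v ++ t) := by
  induction h with
  | nil => simp at hlen
  | cons _ ih => exact .cons (ih (Nat.succ.inj hlen))
  | rel hab => exact .rel hab

section Words

variable {n : ℕ}

theorem PrecLt.append_left {w y : List (Fin n)} (h : PrecLt w y) (x : List (Fin n)) :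
    PrecLt (x ++ w) (x ++ y) := by
  rcases h with hlt | ⟨hlen, hlex⟩
  · exact .inl (by simpa using hlt)
  · exact .inr ⟨by simpa using hlen, List.Lex.append_left _ hlex x⟩

theorem PrecLt.append_right {w y : List (Fin n)} (h : PrecLt w y) (z : List (Fin n)) :
    PrecLt (w ++ z) (y ++ z) := by
  rcases h with hlt | ⟨hlen, hlex⟩
  · exact .inl (by simpa using hlt)
  · exact .inr ⟨by simpa using hlen, lex_append_append_of_length_eq_s3 hlex hlen.symm z z⟩

theorem bword_append {R : Type*} [Monoid R] (b : Fin n → R) (u v : List (Fin n)) :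
    Bword b (u ++ v) = Bword b u * Bword b v := by
  simp [Bword]

end Words

theorem factor_of_good_isGood_general {n : ℕ} (K : Type*) [Field K] {R : Type*} [Ring R]
    [Algebra K R] (b : Fin n → R) (x y z : List (Fin n)) (h : IsGood K b (x ++ y ++ z)) :
    IsGood K b y := by
  intro hy
  let f : R →ₗ[K] R := LinearMap.mulLeftRight K (Bword b x, Bword b z)
  have hf (w : List (Fin n)) : f (Bword b w) = Bword b (x ++ w ++ z) := by
    simp only [f, LinearMap.mulLeftRight_apply, bword_append]
  have hspan : Bword b (x ++ y ++ z) ∈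
      Submodule.span K (f '' (Bword b '' {w | PrecLt w y})) :=
    hf y ▸ Submodule.apply_mem_span_image_of_mem_span f hy
  refine h (Submodule.span_mono ?_ hspan)
  rintro _ ⟨_, ⟨w, hw, rfl⟩, rfl⟩
  exact ⟨x ++ w ++ z, (PrecLt.append_left hw x).append_right z, (hf w).symm⟩

/-- Every factor of a good word is good. -/
theorem factor_of_good_isGood {n : ℕ} (K : Type*) [Field K] {R : Type*} [Ring R] [Algebra K R]
    (b : Fin n → R) (hgen : Algebra.adjoin K (Set.range b) = ⊤)
    (x y z : List (Fin n)) (hy : y ≠ []) (h : IsGood K b (x ++ y ++ z)) :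
    IsGood K b y :=
  factor_of_good_isGood_general K b x y z h
end

section
/- Every good word g factors uniquely as g = l_1 l_2 ⋯ l_m where l_1, …, l_m are good Lyndon words with l_1 ≥ l_2 ≥ ⋯ ≥ l_m lexicographically; that is, every Lyndon factor in the Lyndon factorization of a good word is itself good. -/
/-!
Every factor `l` of a good word `u ++ l ++ v` is good: `≺` is compatible with concatenation on both
sides, so a relation writing `B_l` through smaller words becomes, after multiplication by `B_u` on
the left and `B_v` on the right, a relation writing `B_{ulv}` through smaller words.

Existence of the Lyndon factorization (Chen–Fox–Lyndon): if `a < b` are Lyndon then `a ++ b` is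
Lyndon, so a Lyndon word put in front of a nonincreasing sequence of Lyndon words can be merged with
the head of the sequence for as long as it is smaller than that head. Uniqueness: the first factor
`l` is the longest Lyndon prefix of the word. Indeed a longer one, `p`, would end inside a later
factor `m`, so a proper suffix `q` of `p` would be a prefix of `m`, and `p < q ≤ m ≤ l ≤ p`.
-/

section Words

variable {α : Type*}

theorem prefix_or_eq_append_of_prefix_append {x a b : List α} (h : x <+: a ++ b) :
    x <+: a ∨ ∃ y ≠ [], x = a ++ y ∧ y <+: b := by
  rcases List.prefix_or_prefix_of_prefix h (List.prefix_append a b) with hxa | ⟨y, rfl⟩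
  · exact Or.inl hxa
  · rcases eq_or_ne y [] with rfl | hy
    · simp
    · exact Or.inr ⟨y, hy, rfl, (List.prefix_append_right_inj a).1 h⟩

theorem suffix_or_eq_append_of_suffix_append {s a b : List α} (h : s <:+ a ++ b) :
    s <:+ b ∨ ∃ t ≠ [], s = t ++ b ∧ t <:+ a := by
  rcases List.suffix_or_suffix_of_suffix h (List.suffix_append a b) with hsb | ⟨t, rfl⟩
  · exact Or.inl hsb
  · rcases eq_or_ne t [] with rfl | ht
    · simp
    · exact Or.inr ⟨t, ht, rfl, ((List.suffix_append_inj_of_length_eq rfl).1 h).1⟩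

theorem le_of_prefix [LinearOrder α] {x y : List α} (h : x <+: y) : x ≤ y :=
  -- `List.IsPrefix.le` is about core's `≤` on lists, which Mathlib overrides for linear orders.
  not_lt.1 h.le

theorem append_lt_append_of_not_prefix [LT α] {x y : List α} (h : x < y) (hxy : ¬ x <+: y)
    (u v : List α) : x ++ u < y ++ v := by
  induction h with
  | nil => exact absurd List.nil_prefix hxy
  | rel hab => exact .rel hab
  | cons _ ih => exact .cons (ih fun hp => hxy (List.prefix_cons_inj _ |>.2 hp))

theorem append_lt_append_of_length_le [LT α] [Std.Irrefl (α := α) (· < ·)] {x y : List α}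
    (h : x < y) (hlen : y.length ≤ x.length) (u v : List α) : x ++ u < y ++ v :=
  append_lt_append_of_not_prefix h
    (fun hxy => List.lt_irrefl y (hxy.eq_of_length_le hlen ▸ h)) u v

theorem exists_suffix_prefix_of_prefix_flatten {L : List (List α)} {x : List α} (hx : x ≠ [])
    (h : x <+: L.flatten) : ∃ q ≠ [], q <:+ x ∧ ∃ m ∈ L, q <+: m := by
  induction L generalizing x with
  | nil => exact absurd (List.prefix_nil.1 h) hx
  | cons m L ih =>
    rcases prefix_or_eq_append_of_prefix_append h with hxm | ⟨y, hy, rfl, hyL⟩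
    · exact ⟨x, hx, List.suffix_rfl, m, List.mem_cons_self, hxm⟩
    · obtain ⟨q, hq, hqy, m', hm', hqm'⟩ := ih hy hyL
      exact ⟨q, hq, hqy.trans (List.suffix_append m y), m', List.mem_cons_of_mem m hm', hqm'⟩

end Words

section Lyndon

variable {n : ℕ} {a b g l p s : List (Fin n)} {L M : List (List (Fin n))}

theorem isLyndon_iff_forall_suffix :
    IsLyndon l ↔ l ≠ [] ∧ ∀ s, s <:+ l → s ≠ [] → s ≠ l → l < s := by
  refine and_congr_right fun _ => ⟨fun h s hsl hs hne => ?_, fun h k hk hkl => ?_⟩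
  · obtain ⟨t, rfl⟩ := hsl
    have ht : t ≠ [] := by
      rintro rfl
      exact hne rfl
    have hlt := h t.length (List.length_pos_iff.2 ht) (by simpa [List.length_pos_iff] using hs)
    rwa [List.drop_left] at hlt
  · exact h _ (List.drop_suffix k l) (by simpa using hkl) (fun hdrop => by grind)

theorem IsLyndon.lt_of_suffix (hl : IsLyndon l) (hsl : s <:+ l) (hs : s ≠ []) (hne : s ≠ l) :
    l < s :=
  (isLyndon_iff_forall_suffix.1 hl).2 s hsl hs hne

theorem isLyndon_singleton (x : Fin n) : IsLyndon [x] :=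
  ⟨List.cons_ne_nil x [], fun k hk hk' => by grind⟩

theorem IsLyndon.append_lt_right (ha : IsLyndon a) (hb : IsLyndon b) (hab : a < b) :
    a ++ b < b := by
  by_cases hpre : a <+: b
  · obtain ⟨c, rfl⟩ := hpre
    have hc : a ++ c < c := hb.lt_of_suffix (List.suffix_append a c)
      (by rintro rfl; simp at hab) (by simpa using ha.1)
    exact List.append_left_lt hc
  · simpa using append_lt_append_of_not_prefix hab hpre b []

theorem IsLyndon.append (ha : IsLyndon a) (hb : IsLyndon b) (hab : a < b) :
    IsLyndon (a ++ b) := by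
  refine isLyndon_iff_forall_suffix.2 ⟨List.append_ne_nil_of_left_ne_nil ha.1 b, ?_⟩
  intro s hs hs0 hne
  rcases suffix_or_eq_append_of_suffix_append hs with hsb | ⟨t, ht, rfl, hta⟩
  · have hbs : b ≤ s := by
      rcases eq_or_ne s b with rfl | hsb'
      · exact le_rfl
      · exact (hb.lt_of_suffix hsb hs0 hsb').le
    exact (ha.append_lt_right hb hab).trans_le hbs
  · have hat : a < t := ha.lt_of_suffix hta ht (by rintro rfl; exact hne rfl)
    exact append_lt_append_of_length_le hat hta.length_le b b

/-- `L` is the sequence of factors of a Lyndon factorization of `g`: Lyndon words with product `g`,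
lexicographically nonincreasing. -/
def IsLyndonFactorization (g : List (Fin n)) (L : List (List (Fin n))) : Prop :=
  (∀ l ∈ L, IsLyndon l) ∧ L.IsChain (fun a b => ¬ LexLt a b) ∧ g = L.flatten

namespace IsLyndonFactorization

theorem of_cons (h : IsLyndonFactorization g (l :: L)) : IsLyndonFactorization L.flatten L :=
  ⟨fun m hm => h.1 m (List.mem_cons_of_mem l hm), h.2.1.tail, rfl⟩

theorem le_head_of_mem (h : IsLyndonFactorization g (l :: L)) {m : List (Fin n)} (hm : m ∈ L) :
    m ≤ l :=
  (h.2.1.imp (S := (· ≥ ·)) fun _ _ => not_lt.1).rel_cons hm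

theorem exists_append (hL : IsLyndonFactorization g L) (hl : IsLyndon l) :
    ∃ M, IsLyndonFactorization (l ++ g) M := by
  induction L generalizing g l with
  | nil => exact ⟨[l], by simpa using hl, List.isChain_singleton l, by simp [hL.2.2]⟩
  | cons m L ih =>
    obtain ⟨hLyn, hChain, rfl⟩ := hL
    by_cases hlm : l < m
    · simpa using ih (of_cons ⟨hLyn, hChain, rfl⟩) (hl.append (hLyn m List.mem_cons_self) hlm)
    · exact ⟨l :: m :: L, List.forall_mem_cons.2 ⟨hl, hLyn⟩, hChain.cons_cons hlm, rfl⟩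

theorem prefix_head_of_isLyndon (h : IsLyndonFactorization g (l :: L)) (hp : IsLyndon p)
    (hpg : p <+: g) : p <+: l := by
  rw [h.2.2, List.flatten_cons] at hpg
  rcases prefix_or_eq_append_of_prefix_append hpg with hpl | ⟨x, hx, rfl, hxL⟩
  · exact hpl
  obtain ⟨q, hq, hqx, m, hm, hqm⟩ := exists_suffix_prefix_of_prefix_flatten hx hxL
  have hq_ne : q ≠ l ++ x := by
    have hl : l ≠ [] := (h.1 l List.mem_cons_self).1
    rintro rfl
    simpa [hl] using hqx.length_le
  have hlt : l ++ x < l := calc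
    l ++ x < q := hp.lt_of_suffix (hqx.trans (List.suffix_append l x)) hq hq_ne
    q ≤ m := le_of_prefix hqm
    m ≤ l := h.le_head_of_mem hm
  exact absurd hlt (le_of_prefix (List.prefix_append l x)).not_gt

theorem head_eq (hL : IsLyndonFactorization g (l :: L)) {m : List (Fin n)}
    (hM : IsLyndonFactorization g (m :: M)) : l = m := by
  have hlg : l <+: g := ⟨L.flatten, hL.2.2.symm⟩
  have hmg : m <+: g := ⟨M.flatten, hM.2.2.symm⟩
  have hlm : l <+: m := hM.prefix_head_of_isLyndon (hL.1 l List.mem_cons_self) hlg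
  have hml : m <+: l := hL.prefix_head_of_isLyndon (hM.1 m List.mem_cons_self) hmg
  exact hlm.eq_of_length_le hml.length_le

theorem eq_nil_of_nil (h : IsLyndonFactorization [] L) : L = [] := by
  refine List.eq_nil_iff_forall_not_mem.2 fun l hl => (h.1 l hl).1 ?_
  exact List.flatten_eq_nil_iff.1 h.2.2.symm l hl

theorem unique (hL : IsLyndonFactorization g L) (hM : IsLyndonFactorization g M) : L = M := by
  induction L generalizing g M with
  | nil =>
    obtain rfl : g = [] := hL.2.2
    exact hM.eq_nil_of_nil.symm
  | cons l L ih =>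
    cases M with
    | nil =>
      obtain rfl : g = [] := hM.2.2
      exact hL.eq_nil_of_nil
    | cons m M =>
      obtain rfl := hL.head_eq hM
      have hflat : L.flatten = M.flatten := List.append_cancel_left (hL.2.2.symm.trans hM.2.2)
      rw [ih hL.of_cons (hflat ▸ hM.of_cons)]

end IsLyndonFactorization

theorem exists_isLyndonFactorization (g : List (Fin n)) : ∃ L, IsLyndonFactorization g L := by
  induction g with
  | nil => exact ⟨[], by simp, List.isChain_nil, rfl⟩
  | cons x g ih =>
    obtain ⟨L, hL⟩ := ih
    exact hL.exists_append (isLyndon_singleton x)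

theorem existsUnique_isLyndonFactorization (g : List (Fin n)) :
    ∃! L, IsLyndonFactorization g L :=
  let ⟨L, hL⟩ := exists_isLyndonFactorization g
  ⟨L, hL, fun _ hM => hM.unique hL⟩

end Lyndon

section Good

theorem PrecLt.append_append {n : ℕ} {x y : List (Fin n)} (h : PrecLt x y) (u v : List (Fin n)) :
    PrecLt (u ++ x ++ v) (u ++ y ++ v) := by
  rcases h with hlen | ⟨hlen, hlex⟩
  · exact Or.inl (by simpa using hlen)
  · refine Or.inr ⟨by simpa using hlen, ?_⟩
    rw [List.append_assoc, List.append_assoc]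
    exact List.append_left_lt (append_lt_append_of_length_le hlex hlen.le v v)

theorem Bword_append {n : ℕ} {R : Type*} [Monoid R] (b : Fin n → R) (x y : List (Fin n)) :
    Bword b (x ++ y) = Bword b x * Bword b y := by
  simp [Bword]

theorem IsGood.of_infix {K : Type*} [Field K] {n : ℕ} {R : Type*} [Ring R] [Algebra K R]
    {b : Fin n → R} {g l : List (Fin n)} (hg : IsGood K b g) (hlg : l <:+: g) : IsGood K b l := by
  obtain ⟨u, v, rfl⟩ := hlg
  intro hl
  let f : R →ₗ[K] R := LinearMap.mulLeftRight K (Bword b u, Bword b v)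
  have hf (w : List (Fin n)) : f (Bword b w) = Bword b (u ++ w ++ v) := by
    simp [f, Bword_append, mul_assoc]
  have hmaps : f '' (Bword b '' {w | PrecLt w l}) ⊆ Bword b '' {w | PrecLt w (u ++ l ++ v)} := by
    rintro _ ⟨_, ⟨w, hw, rfl⟩, rfl⟩
    exact ⟨u ++ w ++ v, hw.append_append u v, (hf w).symm⟩
  have hmem := Submodule.apply_mem_span_image_of_mem_span f hl
  exact hg (hf l ▸ Submodule.span_mono hmaps hmem)

end Good

theorem lyndon_factors_of_good_are_good_general {n : ℕ} (K : Type*) [Field K] {R : Type*} [Ring R]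
    [Algebra K R] (b : Fin n → R) (g : List (Fin n)) (hg : IsGood K b g) :
    (∃! L, IsLyndonFactorization g L) ∧
      ∀ L, IsLyndonFactorization g L → ∀ l ∈ L, IsGood K b l := by
  refine ⟨existsUnique_isLyndonFactorization g, ?_⟩
  rintro L ⟨-, -, rfl⟩ l hl
  exact hg.of_infix (List.infix_of_mem_flatten hl)

/-- Every good word factors uniquely as a lexicographically nonincreasing product of Lyndon
words, and every Lyndon factor in this Lyndon factorization of a good word is itself good. -/
theorem lyndon_factors_of_good_are_good {n : ℕ} (K : Type*) [Field K] {R : Type*} [Ring R]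
    [Algebra K R] (b : Fin n → R) (hgen : Algebra.adjoin K (Set.range b) = ⊤)
    (g : List (Fin n)) (hg : IsGood K b g) :
    (∃! L : List (List (Fin n)), (∀ l ∈ L, IsLyndon l) ∧
        L.Chain' (fun a b => ¬ LexLt a b) ∧ g = L.flatten) ∧
      ∀ L : List (List (Fin n)), (∀ l ∈ L, IsLyndon l) →
        L.Chain' (fun a b => ¬ LexLt a b) → g = L.flatten →
        ∀ l ∈ L, IsGood K b l :=
  let ⟨hunique, hgood⟩ := lyndon_factors_of_good_are_good_general K b g hg
  ⟨hunique, fun L hLyn hChain hflat => hgood L ⟨hLyn, hChain, hflat⟩⟩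
end

section
/- For every Lyndon word l, one has ω([l]) = (−1)^{ℓ(l)−1} q^{N(l)} [l] in T. (The paper states this with the scalar written as −q^{−N(l)}; the sign and exponent above are the ones produced by the recursive computation in its proof.) -/
/-- The bilinear pairing `(|x|, |y|)` of the `ℕΠ`-degrees of two words, induced by the
symmetric matrix `M = ((α_i, α_j))_{i,j}`. -/
def wpair {n : ℕ} (M : Matrix (Fin n) (Fin n) ℤ) (x y : List (Fin n)) : ℤ :=
  (x.map (fun i => (y.map (fun j => M i j)).sum)).sum

/-- The monomial in the free algebra `T` over `ℤ[q,q⁻¹]` corresponding to a word. -/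
noncomputable def monoT {n : ℕ} (w : List (Fin n)) :
    FreeAlgebra (LaurentPolynomial ℤ) (Fin n) :=
  (w.map (FreeAlgebra.ι (LaurentPolynomial ℤ))).prod

open scoped Classical in
/-- The `q⁻¹`-bracketing `[l]` of a Lyndon word `l` : `[l] = l` when `ℓ(l) = 1` and
`[l] = [l₁][l₂] - q^{-(|l₁|,|l₂|)} [l₂][l₁]` where `l = l₁l₂` is the co-standard factorization,
`l₁` being the longest Lyndon proper prefix of `l`. -/
noncomputable def bracketT {n : ℕ} (M : Matrix (Fin n) (Fin n) ℤ) :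
    List (Fin n) → FreeAlgebra (LaurentPolynomial ℤ) (Fin n)
  | l =>
    if h : l.length ≤ 1 then monoT l
    else
      let k := max 1 (min (l.length - 1)
        (Nat.findGreatest (fun k => IsLyndon (l.take k)) (l.length - 1)))
      have hk1 : 1 ≤ k := le_max_left _ _
      have hk2 : k ≤ l.length - 1 := max_le (by omega) (min_le_left _ _)
      have h1 : (l.take k).length < l.length := by rw [List.length_take]; omega
      have h2 : (l.drop k).length < l.length := by rw [List.length_drop]; omega
      bracketT M (l.take k) * bracketT M (l.drop k) -
        LaurentPolynomial.T (R := ℤ) (-(wpair M (l.take k) (l.drop k))) •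
          (bracketT M (l.drop k) * bracketT M (l.take k))
  termination_by l => l.length
  decreasing_by all_goals assumption

/-- `N(w) = ½((|w|,|w|) − Σ_i k_i (α_i, α_i)) = Σ_{s<t} (α_{i_s}, α_{i_t})` for the word
`w = v_{i_1}⋯v_{i_k}` (the two expressions agree since `M` is symmetric). -/
def Nword {n : ℕ} (M : Matrix (Fin n) (Fin n) ℤ) : List (Fin n) → ℤ
  | [] => 0
  | i :: t => (t.map (fun j => M i j)).sum + Nword M t

section TwistedCommutator

variable {R A : Type*} [CommRing R] [NonUnitalNonAssocRing A] [Module R A]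

/-- The twisted commutator `ab - r ba`. The bracket `[x, y]_{q⁻¹}` of two words is the case
`r = q^{-(|x|, |y|)}`. -/
def twistedCommutator (r : R) (a b : A) : A := a * b - r • (b * a)

theorem map_twistedCommutator_of_eigenvectors [IsScalarTower R A A] [SMulCommClass R A A]
    (φ : A →+ A) (hmul : ∀ a b, φ (a * b) = φ b * φ a) {r s : R}
    (hsmul : ∀ a, φ (r • a) = s • φ a) (hsr : s * r = 1) {a b : A} {c d : R}
    (ha : φ a = c • a) (hb : φ b = d • b) :
    φ (twistedCommutator r a b) = (-(c * d * s)) • twistedCommutator r a b := by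
  have hcdsr : c * d * s * r = c * d := by rw [mul_assoc, hsr, mul_one]
  calc φ (a * b - r • (b * a))
      = φ b * φ a - s • (φ a * φ b) := by rw [map_sub, hsmul, hmul, hmul]
    _ = (c * d) • (b * a) - (c * d * s) • (a * b) := by
      rw [ha, hb, smul_mul_smul_comm, smul_mul_smul_comm, smul_smul, mul_comm d c, mul_comm s]
    _ = (-(c * d * s)) • (a * b - r • (b * a)) := by
      rw [smul_sub, smul_smul, neg_mul, hcdsr, neg_smul, neg_smul]
      abel

end TwistedCommutator

section WordReversal

variable {R X : Type*} [CommSemiring R]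

theorem span_range_prod_map_ι :
    Submodule.span R (Set.range fun w : List X ↦ (w.map (FreeAlgebra.ι R)).prod) = ⊤ := by
  have hclosure : Set.range (fun w : List X ↦ (w.map (FreeAlgebra.ι R)).prod) =
      Submonoid.closure (Set.range (FreeAlgebra.ι R (X := X))) := by
    rw [← FreeMonoid.mrange_lift, MonoidHom.coe_mrange]
    exact congrArg Set.range (funext fun w ↦ (FreeMonoid.lift_apply _ (.ofList w)).symm)
  rw [hclosure, ← Algebra.adjoin_eq_span, FreeAlgebra.adjoin_range_ι, Algebra.top_toSubmodule]

theorem freeAlgebra_induction_smul_word {P : FreeAlgebra R X → Prop}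
    (smul_word : ∀ (r : R) (w : List X), P (r • (w.map (FreeAlgebra.ι R)).prod))
    (add : ∀ a b, P a → P b → P (a + b)) (a : FreeAlgebra R X) : P a := by
  have ha : a ∈ Submodule.span R (Set.range fun w : List X ↦ (w.map (FreeAlgebra.ι R)).prod) := by
    rw [span_range_prod_map_ι]
    exact Submodule.mem_top
  induction ha using Submodule.closure_induction with
  | zero => simpa only [zero_smul] using smul_word 0 []
  | add a b _ _ hPa hPb => exact add a b hPa hPb
  | smul_mem r a ha =>
    obtain ⟨w, rfl⟩ := ha
    exact smul_word r w

/-- `φ` reverses words and acts on their coefficients by `σ`. With `σ` the involution `q ↦ q⁻¹`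
this characterizes the map `ω`. Only additivity is built in, so that semilinearity and
anti-multiplicativity are consequences. -/
def IsWordReversal (σ : R →+* R) (φ : FreeAlgebra R X →+ FreeAlgebra R X) : Prop :=
  ∀ (r : R) (w : List X),
    φ (r • (w.map (FreeAlgebra.ι R)).prod) = σ r • (w.reverse.map (FreeAlgebra.ι R)).prod

namespace IsWordReversal

variable {σ : R →+* R} {φ : FreeAlgebra R X →+ FreeAlgebra R X}

theorem map_ι (h : IsWordReversal σ φ) (i : X) :
    φ (FreeAlgebra.ι R i) = FreeAlgebra.ι R i := by
  simpa using h 1 [i]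

theorem map_smul (h : IsWordReversal σ φ) (r : R) (a : FreeAlgebra R X) :
    φ (r • a) = σ r • φ a := by
  induction a using freeAlgebra_induction_smul_word with
  | smul_word s w => rw [smul_smul, h, h, _root_.map_mul, smul_smul]
  | add a b ha hb => rw [smul_add, map_add, ha, hb, map_add, smul_add]

theorem map_mul (h : IsWordReversal σ φ) (a b : FreeAlgebra R X) :
    φ (a * b) = φ b * φ a := by
  induction a using freeAlgebra_induction_smul_word with
  | add a a' ha ha' => rw [add_mul, map_add, ha, ha', map_add, mul_add]
  | smul_word r x =>
    induction b using freeAlgebra_induction_smul_word with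
    | add b b' hb hb' => rw [mul_add, map_add, hb, hb', map_add, add_mul]
    | smul_word s y =>
      rw [smul_mul_smul_comm, ← List.prod_append, ← List.map_append, h, h, h, smul_mul_smul_comm,
        ← List.prod_append, ← List.map_append, ← List.reverse_append, _root_.map_mul, mul_comm]

end IsWordReversal

end WordReversal

section Bracketing

open LaurentPolynomial

variable {n : ℕ} (M : Matrix (Fin n) (Fin n) ℤ)

theorem Nword_append (x y : List (Fin n)) :
    Nword M (x ++ y) = Nword M x + Nword M y + wpair M x y := by
  induction x with
  | nil => simp [Nword, wpair]
  | cons i t ih =>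
    have hwpair : wpair M (i :: t) y = (y.map (M i)).sum + wpair M t y := by simp [wpair]
    simp only [List.cons_append, Nword, ih, hwpair, List.map_append, List.sum_append]
    ring

theorem bracketT_singleton (i : Fin n) : bracketT M [i] = FreeAlgebra.ι ℤ[T;T⁻¹] i := by
  rw [bracketT]
  simp [monoT]

theorem exists_bracketT_eq_twistedCommutator {l : List (Fin n)} (hl : 1 < l.length) :
    ∃ x y : List (Fin n), x ≠ [] ∧ y ≠ [] ∧ l = x ++ y ∧
      bracketT M l =
        twistedCommutator (T (-wpair M x y) : ℤ[T;T⁻¹]) (bracketT M x) (bracketT M y) := by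
  rw [bracketT, dif_neg hl.not_ge]
  refine ⟨_, _, ?_, ?_, (List.take_append_drop _ l).symm, rfl⟩
  · rw [← List.length_pos_iff, List.length_take]
    omega
  · rw [← List.length_pos_iff, List.length_drop]
    omega

theorem bracketT_induction {P : List (Fin n) → FreeAlgebra ℤ[T;T⁻¹] (Fin n) → Prop}
    (singleton : ∀ i, P [i] (FreeAlgebra.ι ℤ[T;T⁻¹] i))
    (append : ∀ x y a b, x ≠ [] → y ≠ [] → P x a → P y b →
      P (x ++ y) (twistedCommutator (T (-wpair M x y) : ℤ[T;T⁻¹]) a b))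
    (l : List (Fin n)) (hl : l ≠ []) : P l (bracketT M l) := by
  induction hlength : l.length using Nat.strong_induction_on generalizing l with
  | _ m ih =>
    subst hlength
    rcases (Nat.one_le_iff_ne_zero.2 (mt List.length_eq_zero_iff.1 hl)).eq_or_lt with h1 | h1
    · obtain ⟨i, rfl⟩ := List.length_eq_one_iff.1 h1.symm
      rw [bracketT_singleton]
      exact singleton i
    · obtain ⟨x, y, hx, hy, rfl, hxy⟩ := exists_bracketT_eq_twistedCommutator M h1
      have hx_lt : x.length < (x ++ y).length := by simpa [List.length_pos_iff] using hy
      have hy_lt : y.length < (x ++ y).length := by simpa [List.length_pos_iff] using hx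
      rw [hxy]
      exact append x y _ _ hx hy (ih _ hx_lt x hx rfl) (ih _ hy_lt y hy rfl)

/-- The scalar `(-1)^{ℓ(w)-1} q^{N(w)}` by which `ω` acts on `[w]`. It is meant for nonempty `w`,
as the subtraction is truncated. -/
noncomputable def omegaEigenvalue (w : List (Fin n)) : ℤ[T;T⁻¹] :=
  (-1) ^ (w.length - 1) * T (Nword M w)

theorem omegaEigenvalue_singleton (i : Fin n) : omegaEigenvalue M [i] = 1 := by
  simp [omegaEigenvalue, Nword]

theorem omegaEigenvalue_append {x y : List (Fin n)} (hx : x ≠ []) (hy : y ≠ []) :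
    omegaEigenvalue M (x ++ y) =
      -(omegaEigenvalue M x * omegaEigenvalue M y * T (wpair M x y)) := by
  have hx_pos := List.length_pos_iff.2 hx
  have hy_pos := List.length_pos_iff.2 hy
  have hlength : (x ++ y).length - 1 = (x.length - 1) + (y.length - 1) + 1 := by
    rw [List.length_append]
    omega
  rw [omegaEigenvalue, hlength, Nword_append, T_add, T_add, omegaEigenvalue, omegaEigenvalue]
  ring

theorem omega_bracket_general
    (ω : FreeAlgebra ℤ[T;T⁻¹] (Fin n) →+ FreeAlgebra ℤ[T;T⁻¹] (Fin n))
    (hω : ∀ (f : ℤ[T;T⁻¹]) (w : List (Fin n)), ω (f • monoT w) = invert f • monoT w.reverse)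
    (l : List (Fin n)) (hl : l ≠ []) :
    ω (bracketT M l) =
      ((-1 : ℤ[T;T⁻¹]) ^ (l.length - 1) * T (Nword M l)) • bracketT M l := by
  have hrev : IsWordReversal (invert : ℤ[T;T⁻¹] ≃ₐ[ℤ] ℤ[T;T⁻¹]).toRingHom ω := hω
  change ω (bracketT M l) = omegaEigenvalue M l • bracketT M l
  refine bracketT_induction M (P := fun w a ↦ ω a = omegaEigenvalue M w • a) ?_ ?_ l hl
  · intro i
    rw [hrev.map_ι, omegaEigenvalue_singleton, one_smul]
  · intro x y a b hx hy ha hb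
    have hsmul (c) : ω ((T (-wpair M x y) : ℤ[T;T⁻¹]) • c) =
        (T (wpair M x y) : ℤ[T;T⁻¹]) • ω c := by
      simpa using hrev.map_smul (T (-wpair M x y)) c
    have hunit : (T (wpair M x y) * T (-wpair M x y) : ℤ[T;T⁻¹]) = 1 := by
      rw [← T_add, add_neg_cancel, T_zero]
    rw [omegaEigenvalue_append M hx hy]
    exact map_twistedCommutator_of_eigenvectors ω hrev.map_mul hsmul hunit ha hb

end Bracketing

/-- For every Lyndon word `l`, `ω([l]) = (-1)^{ℓ(l)-1} q^{N(l)} [l]` in `T`, where `ω` is the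
`q ↦ q⁻¹`-semilinear anti-automorphism of `T` reversing words. -/
theorem omega_bracket {n : ℕ} (M : Matrix (Fin n) (Fin n) ℤ) (hM : ∀ i j, M i j = M j i)
    (ω : FreeAlgebra (LaurentPolynomial ℤ) (Fin n) →+ FreeAlgebra (LaurentPolynomial ℤ) (Fin n))
    (hω : ∀ (f : LaurentPolynomial ℤ) (w : List (Fin n)),
      ω (f • monoT w) = LaurentPolynomial.invert f • monoT w.reverse)
    (l : List (Fin n)) (hl : IsLyndon l) :
    ω (bracketT M l) =
      ((-1 : LaurentPolynomial ℤ) ^ (l.length - 1) * LaurentPolynomial.T (R := ℤ) (Nword M l)) •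
        bracketT M l :=
  omega_bracket_general M ω hω l hl.1
end
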